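/- Let F be a field, V a finite-dimensional F-vector space, and T an endomorphism of V such that V is the sum (supremum) of the eigenspaces of T. If H ⊊ V is a proper T-invariant subspace, then there exist an eigenvalue a₀ of T and a nonzero linear functional χ : V → F such that χ vanishes on H, χ vanishes on eigenspace(T, a) for every eigenvalue a ≠ a₀, and χ does not vanish identically on eigenspace(T, a₀). -/

import Mathlib

/-!
An eigenvector `v ∉ H` with eigenvalue `a₀` stays outside `H` plus the sum of all the other
eigenspaces: modulo `H` it would otherwise be a nonzero `a₀`-eigenvector of the induced endomorphism
lying in the sum of the eigenspaces for the other eigenvalues, and these are independent. Hence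
a functional can kill that whole sum without killing `v`.
-/

section CommRing

variable {R M N : Type*} [CommRing R] [AddCommGroup M] [Module R M] [AddCommGroup N] [Module R N]

theorem eigenspace_le_comap_eigenspace_of_comp_eq {f : Module.End R M} {g : Module.End R N}
    {φ : M →ₗ[R] N} (hφ : g ∘ₗ φ = φ ∘ₗ f) (a : R) :
    f.eigenspace a ≤ (g.eigenspace a).comap φ := by
  intro x hx
  rw [Module.End.mem_eigenspace_iff] at hx
  rw [Submodule.mem_comap, Module.End.mem_eigenspace_iff]
  calc g (φ x) = φ (f x) := LinearMap.congr_fun hφ x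
    _ = a • φ x := by rw [hx, map_smul]

theorem eigenspace_inf_sup_iSup_eigenspace_le [IsDomain R] {f : Module.End R M}
    {p : Submodule R M} [Module.IsTorsionFree R (M ⧸ p)] (hp : p ≤ p.comap f) (a₀ : R) :
    f.eigenspace a₀ ⊓ (p ⊔ ⨆ a ≠ a₀, f.eigenspace a) ≤ p := by
  let g : Module.End R (M ⧸ p) := p.mapQ p f hp
  have mkQ_eigenspace (a : R) : f.eigenspace a ≤ (g.eigenspace a).comap p.mkQ :=
    eigenspace_le_comap_eigenspace_of_comp_eq (p.mapQ_mkQ p f) a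
  have mkQ_sup : p ⊔ ⨆ a ≠ a₀, f.eigenspace a ≤ (⨆ a ≠ a₀, g.eigenspace a).comap p.mkQ :=
    sup_le (p.le_comap_mkQ _) <| iSup₂_le fun a ha ↦
      (mkQ_eigenspace a).trans (Submodule.comap_mono (le_iSup₂_of_le a ha le_rfl))
  rintro x ⟨hx, hx'⟩
  rw [← Submodule.Quotient.mk_eq_zero p]
  exact Submodule.disjoint_def.mp (g.eigenspaces_iSupIndep a₀) _ (mkQ_eigenspace a₀ hx)
    (mkQ_sup hx')

end CommRing

section Field

variable {F V : Type*} [Field F] [AddCommGroup V] [Module F V]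

theorem exists_dual_apply_ne_zero_of_mem_eigenspace_of_notMem {T : Module.End F V}
    {H : Submodule F V} (hH : H ≤ H.comap T) {a₀ : F} {v : V} (hv : v ∈ T.eigenspace a₀)
    (hvH : v ∉ H) :
    ∃ χ : Module.Dual F V, χ v ≠ 0 ∧ H ≤ χ.ker ∧ ∀ a ≠ a₀, T.eigenspace a ≤ χ.ker := by
  have hv_sup : v ∉ H ⊔ ⨆ a ≠ a₀, T.eigenspace a := fun h ↦
    hvH (eigenspace_inf_sup_iSup_eigenspace_le hH a₀ ⟨hv, h⟩)
  obtain ⟨χ, hχv, hχ⟩ := Submodule.exists_le_ker_of_notMem hv_sup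
  obtain ⟨hχH, hχE⟩ := sup_le_iff.mp hχ
  exact ⟨χ, hχv, hχH, iSup₂_le_iff.mp hχE⟩

theorem exists_functional_vanishing_on_proper_invariant_subspace_general
    (T : Module.End F V) (hdiag : (⨆ a : F, T.eigenspace a) = ⊤)
    (H : Submodule F V) (hH : ∀ x ∈ H, T x ∈ H) (hHproper : H ≠ ⊤) :
    ∃ a₀ : F, T.HasEigenvalue a₀ ∧
      ∃ χ : V →ₗ[F] F, χ ≠ 0 ∧
        (∀ x ∈ H, χ x = 0) ∧
        (∀ a : F, T.HasEigenvalue a → a ≠ a₀ → ∀ x ∈ T.eigenspace a, χ x = 0) ∧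
        (∃ x ∈ T.eigenspace a₀, χ x ≠ 0) := by
  obtain ⟨a₀, ha₀⟩ : ∃ a₀, ¬ T.eigenspace a₀ ≤ H := by
    rwa [← not_forall, ← iSup_le_iff, hdiag, top_le_iff]
  obtain ⟨v, hv, hvH⟩ := SetLike.not_le_iff_exists.mp ha₀
  have hv_ne : v ≠ 0 := fun h ↦ hvH (h ▸ H.zero_mem)
  obtain ⟨χ, hχv, hχH, hχE⟩ := exists_dual_apply_ne_zero_of_mem_eigenspace_of_notMem hH hv hvH
  have hχ_ne : χ ≠ 0 := fun h ↦ hχv (LinearMap.congr_fun h v)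
  exact ⟨a₀, Module.End.hasEigenvalue_of_hasEigenvector ⟨hv, hv_ne⟩, χ, hχ_ne, hχH,
    fun a _ ha ↦ hχE a ha, v, hv, hχv⟩

end Field

/-- Let `F` be a field, `V` a finite-dimensional `F`-vector space, and
`T` an endomorphism of `V` such that `V` is the supremum of the eigenspaces of `T`.
If `H ⊊ V` is a proper `T`-invariant subspace, then there exist an eigenvalue `a₀` of
`T` and a nonzero linear functional `χ : V → F` vanishing on `H`, vanishing on
`eigenspace T a` for every eigenvalue `a ≠ a₀`, and not vanishing identically on
`eigenspace T a₀`. -/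
theorem exists_functional_vanishing_on_proper_invariant_subspace
    (F V : Type*) [Field F] [AddCommGroup V] [Module F V] [FiniteDimensional F V]
    (T : Module.End F V) (hdiag : (⨆ a : F, T.eigenspace a) = ⊤)
    (H : Submodule F V) (hH : ∀ x ∈ H, T x ∈ H) (hHproper : H ≠ ⊤) :
    ∃ a₀ : F, T.HasEigenvalue a₀ ∧
      ∃ χ : V →ₗ[F] F, χ ≠ 0 ∧
        (∀ x ∈ H, χ x = 0) ∧
        (∀ a : F, T.HasEigenvalue a → a ≠ a₀ → ∀ x ∈ T.eigenspace a, χ x = 0) ∧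
        (∃ x ∈ T.eigenspace a₀, χ x ≠ 0) :=
  exists_functional_vanishing_on_proper_invariant_subspace_general T hdiag H hH hHproper
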